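/- Let n be a positive integer and, for each i ∈ {1,…,n}, let R_i ⊆ S_i be an FCP ring extension; set R := ∏_{i=1}^n R_i and S := ∏_{i=1}^n S_i with the componentwise inclusion, which is an FCP extension. Then R ⊆ S is catenarian if and only if R_i ⊆ S_i is catenarian for each i; moreover, in that case ℓ[R,S] = Σ_{i=1}^n ℓ[R_i,S_i]. -/

import Mathlib

/-- A maximal chain of length `n` from `T` to `U`: each step is a covering. -/
def IsMaxChainFromTo {α : Type*} [PartialOrder α] (T U : α) (n : ℕ)
    (c : Fin (n + 1) → α) : Prop :=
  c 0 = T ∧ c (Fin.last n) = U ∧ ∀ i : Fin n, c i.castSucc ⋖ c i.succ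

/-- The subextension determined by `T ≤ U` is catenarian: all maximal chains from
`T` to `U` have the same length. -/
def IsCatenarianFromTo {α : Type*} [PartialOrder α] (T U : α) : Prop :=
  ∀ (n m : ℕ) (c : Fin (n + 1) → α) (d : Fin (m + 1) → α),
    IsMaxChainFromTo T U n c → IsMaxChainFromTo T U m d → n = m

/-- The extension `R ⊆ S` has FCP: every chain of `R`-subalgebras of `S` is finite. -/
def IsFCPExt (R S : Type*) [CommRing R] [CommRing S] [Algebra R S] : Prop :=
  ∀ C : Set (Subalgebra R S), IsChain (· ≤ ·) C → C.Finite

/-- The extension `R ⊆ S` is catenarian. -/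
def IsCatenarianExt (R S : Type*) [CommRing R] [CommRing S] [Algebra R S] : Prop :=
  IsCatenarianFromTo (⊥ : Subalgebra R S) ⊤

/-- The length `ℓ[T,U]`: the supremum of lengths of chains from `T` to `U`. -/
noncomputable def extLength {α : Type*} [PartialOrder α] (T U : α) : ℕ :=
  sSup {n | ∃ c : Fin (n + 1) → α, StrictMono c ∧ c 0 = T ∧ c (Fin.last n) = U}

/-!
Multiplying by the idempotents of `∏ Rᵢ` shows that every `∏ Rᵢ`-subalgebra of `∏ Sᵢ` is a product
of `Rᵢ`-subalgebras of the `Sᵢ`. The statement thus becomes one about a finite product of orders.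

A covering in a product of orders changes exactly one coordinate, by a covering. Hence the set of
lengths of the maximal chains from `a` to `b` is the Minkowski sum of the corresponding sets for
`aᵢ ≤ bᵢ`. A finite sum of nonempty sets of natural numbers has at most one element if and only if
every summand does. The length formula follows because, in a catenarian order in which strict
chains can be refined to maximal ones, the length is that of any maximal chain.
-/

open scoped Pointwise

section Chains

variable {α β : Type*} [PartialOrder α] [PartialOrder β] {a b c : α} {m n : ℕ}

/-- The set of lengths of the maximal chains from `a` to `b`; it is empty unless such a (finite)
chain exists. -/
def maxChainLengths (a b : α) : Set ℕ :=
  {n | ∃ c, IsMaxChainFromTo a b n c}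

theorem isCatenarianFromTo_iff_subsingleton :
    IsCatenarianFromTo a b ↔ (maxChainLengths a b).Subsingleton :=
  ⟨fun h n ⟨c, hc⟩ m ⟨d, hd⟩ => h n m c d hc hd, fun h _ _ c d hc hd => h ⟨c, hc⟩ ⟨d, hd⟩⟩

theorem zero_mem_maxChainLengths_iff : 0 ∈ maxChainLengths a b ↔ a = b :=
  ⟨fun ⟨_, h₀, h₁, _⟩ => h₀.symm.trans h₁, fun h => ⟨fun _ => a, rfl, h, fun i => i.elim0⟩⟩

theorem succ_mem_maxChainLengths_iff :
    n + 1 ∈ maxChainLengths a c ↔ ∃ b, n ∈ maxChainLengths a b ∧ b ⋖ c := by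
  constructor
  · rintro ⟨d, h₀, rfl, hd⟩
    exact ⟨_, ⟨Fin.init d, h₀, rfl, fun i => hd i.castSucc⟩, hd (Fin.last n)⟩
  · rintro ⟨b, ⟨d, h₀, rfl, hd⟩, hc⟩
    refine ⟨Fin.snoc (α := fun _ => α) d c, ?_, Fin.snoc_last .., fun i => ?_⟩
    · rw [← Fin.castSucc_zero, Fin.snoc_castSucc, h₀]
    · induction i using Fin.lastCases with
      | last => rwa [Fin.snoc_castSucc, Fin.succ_last, Fin.snoc_last]
      | cast i =>
        rw [Fin.snoc_castSucc, Fin.succ_castSucc, Fin.snoc_castSucc]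
        exact hd i

theorem add_mem_maxChainLengths (hm : m ∈ maxChainLengths a b) (hn : n ∈ maxChainLengths b c) :
    m + n ∈ maxChainLengths a c := by
  induction n generalizing c with
  | zero => rwa [← zero_mem_maxChainLengths_iff.1 hn]
  | succ n ih =>
    obtain ⟨d, hd, hdc⟩ := succ_mem_maxChainLengths_iff.1 hn
    exact succ_mem_maxChainLengths_iff.2 ⟨d, ih hd, hdc⟩

theorem maxChainLengths_subset_of_map_covBy {f : α → β} (hf : ∀ x y, x ⋖ y → f x ⋖ f y) (a b : α) :
    maxChainLengths a b ⊆ maxChainLengths (f a) (f b) := by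
  rintro n ⟨c, rfl, rfl, hc⟩
  exact ⟨f ∘ c, rfl, rfl, fun i => hf _ _ (hc i)⟩

theorem maxChainLengths_orderIso (e : α ≃o β) (a b : α) :
    maxChainLengths (e a) (e b) = maxChainLengths a b := by
  apply Set.Subset.antisymm
  · simpa only [e.symm_apply_apply] using maxChainLengths_subset_of_map_covBy
      (fun _ _ => (apply_covBy_apply_iff e.symm).2) (e a) (e b)
  · exact maxChainLengths_subset_of_map_covBy (fun _ _ => (apply_covBy_apply_iff e).2) a b

theorem isCatenarianFromTo_orderIso (e : α ≃o β) :
    IsCatenarianFromTo (e a) (e b) ↔ IsCatenarianFromTo a b := by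
  simp only [isCatenarianFromTo_iff_subsingleton, maxChainLengths_orderIso]

theorem extLength_orderIso (e : α ≃o β) (a b : α) : extLength (e a) (e b) = extLength a b := by
  refine congrArg sSup (Set.ext fun n => ⟨?_, ?_⟩)
  · rintro ⟨c, hc, h₀, h₁⟩
    exact ⟨e.symm ∘ c, e.symm.strictMono.comp hc, e.symm_apply_eq.2 h₀, e.symm_apply_eq.2 h₁⟩
  · rintro ⟨c, hc, rfl, rfl⟩
    exact ⟨e ∘ c, e.strictMono.comp hc, rfl, rfl⟩

theorem IsMaxChainFromTo.strictMono {c : Fin (n + 1) → α} (h : IsMaxChainFromTo a b n c) :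
    StrictMono c :=
  Fin.strictMono_iff_lt_succ.2 fun i => (h.2.2 i).lt

section WellFounded

variable [WellFoundedLT α] [WellFoundedGT α]

theorem maxChainLengths_nonempty (h : a ≤ b) : (maxChainLengths a b).Nonempty := by
  obtain ⟨c, h₀, n, hn, hc⟩ := exists_covBy_seq_of_wellFoundedLT_wellFoundedGT_of_le h
  exact ⟨n, fun i => c i, h₀, hn, fun i => hc i i.isLt⟩

theorem exists_mem_maxChainLengths_ge_of_strictMono {c : Fin (n + 1) → α} (hc : StrictMono c) :
    ∃ m ∈ maxChainLengths (c 0) (c (Fin.last n)), n ≤ m := by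
  obtain ⟨t, i, ht, h₀, h₁⟩ := (LTSeries.mk n c hc).exists_relSeries_covBy
  have htc : ∀ j, t (i j) = c j := congrFun ht
  refine ⟨t.length, ⟨t, ?_, ?_, t.step⟩, ?_⟩
  · rw [← h₀]
    exact htc 0
  · rw [← h₁]
    exact htc (Fin.last n)
  · simpa using Fintype.card_le_of_embedding i

theorem IsCatenarianFromTo.extLength_eq (h : IsCatenarianFromTo a b)
    (hn : n ∈ maxChainLengths a b) : extLength a b = n := by
  refine IsGreatest.csSup_eq ⟨?_, ?_⟩
  · obtain ⟨c, hc⟩ := hn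
    exact ⟨c, hc.strictMono, hc.1, hc.2.1⟩
  · rintro k ⟨c, hc, rfl, rfl⟩
    obtain ⟨m, hm, hkm⟩ := exists_mem_maxChainLengths_ge_of_strictMono hc
    exact hkm.trans_eq (isCatenarianFromTo_iff_subsingleton.1 h hm hn)

end WellFounded

end Chains

section FiniteChains

variable {α : Type*} [Preorder α]

theorem wellFoundedGT_of_forall_isChain_finite (h : ∀ C : Set α, IsChain (· ≤ ·) C → C.Finite) :
    WellFoundedGT α := by
  refine ⟨RelEmbedding.wellFounded_iff_isEmpty.2 ⟨fun f => ?_⟩⟩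
  have hf : StrictMono f := fun _ _ => f.map_rel_iff.2
  exact Set.infinite_range_of_injective f.injective (h _ hf.monotone.isChain_range)

theorem wellFoundedLT_of_forall_isChain_finite (h : ∀ C : Set α, IsChain (· ≤ ·) C → C.Finite) :
    WellFoundedLT α := by
  rw [← wellFoundedGT_dual_iff]
  exact wellFoundedGT_of_forall_isChain_finite (α := αᵒᵈ) fun C hC => h C hC.symm

end FiniteChains

theorem subsingleton_sum_iff {ι M : Type*} [Fintype ι] [AddCancelCommMonoid M] {s : ι → Set M}
    (hs : ∀ i, (s i).Nonempty) : (∑ i, s i).Subsingleton ↔ ∀ i, (s i).Subsingleton := by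
  classical
  simp only [Set.Subsingleton, Set.mem_fintype_sum]
  constructor
  · intro h i x hx y hy
    choose f hf using hs
    have hmem : ∀ z ∈ s i, ∀ j, Function.update f i z j ∈ s j := fun z hz =>
      (Function.forall_update_iff f fun j w => w ∈ s j).2 ⟨hz, fun j _ => hf j⟩
    have hsum := h ⟨_, hmem x hx, rfl⟩ ⟨_, hmem y hy, rfl⟩
    simpa only [Finset.sum_update_of_mem (Finset.mem_univ i), add_left_inj] using hsum
  · rintro h _ ⟨f, hf, rfl⟩ _ ⟨g, hg, rfl⟩
    exact Finset.sum_congr rfl fun i _ => h i (hf i) (hg i)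

section Pi

variable {ι : Type*} {α : ι → Type*} [∀ i, PartialOrder (α i)]

theorem update_covBy_update [DecidableEq ι] (a : ∀ i, α i) {i : ι} {x y : α i} (h : x ⋖ y) :
    Function.update a i x ⋖ Function.update a i y :=
  Pi.covBy_iff.2 ⟨i, by simpa using h, fun j hj => by simp [hj]⟩

variable [Fintype ι] {a b : ∀ i, α i}

theorem sum_maxChainLengths_subset :
    ∑ i, maxChainLengths (a i) (b i) ⊆ maxChainLengths a b := by
  classical
  intro n hn
  obtain ⟨f, hf, rfl⟩ := (Set.mem_fintype_sum _ _).1 hn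
  -- Move the coordinates from `a` to `b` one at a time.
  have partial_sum : ∀ s : Finset ι, ∑ i ∈ s, f i ∈ maxChainLengths a (s.piecewise b a) := by
    intro s
    induction s using Finset.induction with
    | empty => simp [zero_mem_maxChainLengths_iff]
    | insert i s hi ih =>
      have hstep := maxChainLengths_subset_of_map_covBy
        (fun _ _ => update_covBy_update (s.piecewise b a)) _ _ (hf i)
      have hupdate : Function.update (s.piecewise b a) i (a i) = s.piecewise b a :=
        Function.update_eq_self_iff.2 (Finset.piecewise_eq_of_notMem _ _ _ hi).symm
      rw [hupdate, ← Finset.piecewise_insert] at hstep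
      rw [Finset.sum_insert hi, add_comm]
      exact add_mem_maxChainLengths ih hstep
  simpa using partial_sum Finset.univ

theorem maxChainLengths_subset_sum :
    maxChainLengths a b ⊆ ∑ i, maxChainLengths (a i) (b i) := by
  classical
  intro n hn
  rw [Set.mem_fintype_sum]
  induction n generalizing b with
  | zero =>
    obtain rfl := zero_mem_maxChainLengths_iff.1 hn
    exact ⟨0, fun i => zero_mem_maxChainLengths_iff.2 rfl, by simp⟩
  | succ n ih =>
    obtain ⟨c, hc, hcb⟩ := succ_mem_maxChainLengths_iff.1 hn
    obtain ⟨f, hf, rfl⟩ := ih hc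
    obtain ⟨i, hi, heq⟩ := Pi.covBy_iff.1 hcb
    refine ⟨f + Pi.single i 1, fun j => ?_, by simp [Finset.sum_add_distrib]⟩
    rcases eq_or_ne j i with rfl | hj
    · simpa using succ_mem_maxChainLengths_iff.2 ⟨c j, hf j, hi⟩
    · simpa [hj, ← heq j hj] using hf j

theorem maxChainLengths_pi (a b : ∀ i, α i) :
    maxChainLengths a b = ∑ i, maxChainLengths (a i) (b i) :=
  maxChainLengths_subset_sum.antisymm sum_maxChainLengths_subset

end Pi

section FinitePi

variable {ι : Type*} [Finite ι] {α : ι → Type*} [∀ i, PartialOrder (α i)]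

theorem isCatenarianFromTo_pi_iff {a b : ∀ i, α i}
    (h : ∀ i, (maxChainLengths (a i) (b i)).Nonempty) :
    IsCatenarianFromTo a b ↔ ∀ i, IsCatenarianFromTo (a i) (b i) := by
  have := Fintype.ofFinite ι
  simp only [isCatenarianFromTo_iff_subsingleton, maxChainLengths_pi, subsingleton_sum_iff h]

theorem wellFoundedGT_pi [∀ i, WellFoundedGT (α i)] : WellFoundedGT (∀ i, α i) :=
  ⟨(inferInstance : WellFoundedLT (∀ i, (α i)ᵒᵈ)).wf⟩

end FinitePi

theorem extLength_pi {ι : Type*} [Fintype ι] {α : ι → Type*} [∀ i, PartialOrder (α i)]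
    [∀ i, WellFoundedLT (α i)] [∀ i, WellFoundedGT (α i)] {a b : ∀ i, α i} (hab : a ≤ b)
    (h : ∀ i, IsCatenarianFromTo (a i) (b i)) :
    extLength a b = ∑ i, extLength (a i) (b i) := by
  have := wellFoundedGT_pi (α := α)
  have hne := fun i => maxChainLengths_nonempty (hab i)
  have hcat := (isCatenarianFromTo_pi_iff hne).2 h
  choose f hf using hne
  have hsum : ∑ i, f i ∈ maxChainLengths a b :=
    sum_maxChainLengths_subset ((Set.mem_fintype_sum _ _).2 ⟨f, hf, rfl⟩)
  rw [hcat.extLength_eq hsum]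
  exact Finset.sum_congr rfl fun i _ => ((h i).extLength_eq (hf i)).symm

section Subalgebra

variable {ι : Type*} {R S : ι → Type*} [∀ i, CommSemiring (R i)] [∀ i, Semiring (S i)]
  [∀ i, Algebra (R i) (S i)]

/-- The product `∏ Bᵢ` as a subalgebra over `∏ Rᵢ`, whereas in `Subalgebra.pi` all factors are
algebras over the same ring. -/
def piSubalgebra (B : ∀ i, Subalgebra (R i) (S i)) : Subalgebra (∀ i, R i) (∀ i, S i) where
  carrier := {x | ∀ i, x i ∈ B i}
  mul_mem' hx hy i := (B i).mul_mem (hx i) (hy i)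
  add_mem' hx hy i := (B i).add_mem (hx i) (hy i)
  algebraMap_mem' r i := (B i).algebraMap_mem (r i)

/-- The projection to `S i` of a subalgebra of `∏ Sᵢ`, as a subalgebra over `R i`. -/
def evalSubalgebra (A : Subalgebra (∀ i, R i) (∀ i, S i)) (i : ι) : Subalgebra (R i) (S i) where
  __ := A.toSubsemiring.map (Pi.evalRingHom S i)
  algebraMap_mem' r := by
    classical
    exact ⟨_, A.algebraMap_mem (Pi.single i r), congrArg _ (Pi.single_eq_same i r)⟩

theorem evalSubalgebra_piSubalgebra (B : ∀ i, Subalgebra (R i) (S i)) :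
    evalSubalgebra (piSubalgebra B) = B := by
  classical
  ext i x
  constructor
  · rintro ⟨y, hy, rfl⟩
    exact hy i
  · intro hx
    refine ⟨Pi.single i x, fun j => ?_, Pi.single_eq_same i x⟩
    rcases eq_or_ne j i with rfl | hj
    · rwa [Pi.single_eq_same]
    · rw [Pi.single_eq_of_ne hj]
      exact (B j).zero_mem

theorem pi_single_apply_mem [DecidableEq ι] {A : Subalgebra (∀ i, R i) (∀ i, S i)} {x : ∀ i, S i}
    (hx : x ∈ A) (i : ι) : Pi.single i (x i) ∈ A := by
  have hidem : algebraMap (∀ i, R i) (∀ i, S i) (Pi.single i 1) = Pi.single i 1 :=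
    funext fun j => by
      change algebraMap (R j) (S j) (Pi.single i 1 j) = _
      rcases eq_or_ne j i with rfl | hj
      · simp
      · simp [hj]
  have hmul := A.mul_mem (A.algebraMap_mem (Pi.single i 1)) hx
  rwa [hidem, ← Pi.single_mul_left, one_mul] at hmul

variable [Finite ι]

theorem piSubalgebra_evalSubalgebra (A : Subalgebra (∀ i, R i) (∀ i, S i)) :
    piSubalgebra (evalSubalgebra A) = A := by
  classical
  have := Fintype.ofFinite ι
  ext x
  refine ⟨fun hx => ?_, fun hx i => ⟨x, hx, rfl⟩⟩
  have hsingle : ∀ i, Pi.single i (x i) ∈ A := fun i => by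
    obtain ⟨y, hy, hyx⟩ := hx i
    rw [← hyx]
    exact pi_single_apply_mem hy i
  rw [← Finset.univ_sum_single x]
  exact A.sum_mem fun i _ => hsingle i

/-- Subalgebras of `∏ Sᵢ` over `∏ Rᵢ` are the products of `Rᵢ`-subalgebras of `Sᵢ`. -/
def subalgebraPiOrderIso : Subalgebra (∀ i, R i) (∀ i, S i) ≃o ∀ i, Subalgebra (R i) (S i) where
  toFun := evalSubalgebra
  invFun := piSubalgebra
  left_inv := piSubalgebra_evalSubalgebra
  right_inv := evalSubalgebra_piSubalgebra
  map_rel_iff' {A A'} := by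
    refine ⟨fun h => ?_, fun h i => Set.image_mono h⟩
    rw [← piSubalgebra_evalSubalgebra A, ← piSubalgebra_evalSubalgebra A']
    exact fun x hx i => h i (hx i)

end Subalgebra

section Extension

variable {ι : Type*} {R S : ι → Type*} [∀ i, CommRing (R i)] [∀ i, CommRing (S i)]
  [∀ i, Algebra (R i) (S i)]

theorem isCatenarianExt_pi_iff [Finite ι] (hFCP : ∀ i, IsFCPExt (R i) (S i)) :
    IsCatenarianExt (∀ i, R i) (∀ i, S i) ↔ ∀ i, IsCatenarianExt (R i) (S i) := by
  have := fun i => wellFoundedLT_of_forall_isChain_finite (hFCP i)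
  have := fun i => wellFoundedGT_of_forall_isChain_finite (hFCP i)
  unfold IsCatenarianExt
  rw [← isCatenarianFromTo_orderIso subalgebraPiOrderIso, map_bot, map_top]
  exact isCatenarianFromTo_pi_iff fun i => maxChainLengths_nonempty bot_le

theorem extLength_subalgebra_pi [Fintype ι] (hFCP : ∀ i, IsFCPExt (R i) (S i))
    (h : ∀ i, IsCatenarianExt (R i) (S i)) :
    extLength (⊥ : Subalgebra (∀ i, R i) (∀ i, S i)) ⊤ =
      ∑ i, extLength (⊥ : Subalgebra (R i) (S i)) ⊤ := by
  have := fun i => wellFoundedLT_of_forall_isChain_finite (hFCP i)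
  have := fun i => wellFoundedGT_of_forall_isChain_finite (hFCP i)
  rw [← extLength_orderIso subalgebraPiOrderIso, map_bot, map_top]
  exact extLength_pi bot_le h

end Extension

theorem stmt_4_general {ι : Type*} [Fintype ι] (R S : ι → Type*)
    [∀ i, CommRing (R i)] [∀ i, CommRing (S i)] [∀ i, Algebra (R i) (S i)]
    {algPi : Algebra (∀ i, R i) (∀ i, S i)} (hFCP : ∀ i, IsFCPExt (R i) (S i))
    (halg : ∀ r i, algebraMap (∀ i, R i) (∀ i, S i) r i = algebraMap (R i) (S i) (r i)) :
    (IsCatenarianExt (∀ i, R i) (∀ i, S i) ↔ ∀ i, IsCatenarianExt (R i) (S i)) ∧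
      (IsCatenarianExt (∀ i, R i) (∀ i, S i) →
        extLength (⊥ : Subalgebra (∀ i, R i) (∀ i, S i)) ⊤ =
          ∑ i, extLength (⊥ : Subalgebra (R i) (S i)) ⊤) := by
  obtain rfl : algPi = Pi.instAlgebraForall S R :=
    Algebra.algebra_ext _ _ fun r => funext (halg r)
  have hiff := isCatenarianExt_pi_iff hFCP
  exact ⟨hiff, fun h => extLength_subalgebra_pi hFCP (hiff.1 h)⟩

/-- For a finite family of FCP extensions `Rᵢ ⊆ Sᵢ` (`1 ≤ n`), the product
extension `∏ Rᵢ ⊆ ∏ Sᵢ` is catenarian iff each `Rᵢ ⊆ Sᵢ` is; in that case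
`ℓ[R,S] = ∑ ℓ[Rᵢ,Sᵢ]`. -/
theorem stmt_4 (n : ℕ) (hn : 1 ≤ n) (R S : Fin n → Type*)
    [∀ i, CommRing (R i)] [∀ i, CommRing (S i)] [∀ i, Algebra (R i) (S i)]
    (hinj : ∀ i, Function.Injective (algebraMap (R i) (S i)))
    (hFCP : ∀ i, IsFCPExt (R i) (S i)) :
    letI : Algebra (∀ i, R i) (∀ i, S i) :=
      (Pi.ringHom fun i => (algebraMap (R i) (S i)).comp (Pi.evalRingHom R i)).toAlgebra
    ((IsCatenarianExt (∀ i, R i) (∀ i, S i) ↔ ∀ i, IsCatenarianExt (R i) (S i)) ∧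
      (IsCatenarianExt (∀ i, R i) (∀ i, S i) →
        extLength (⊥ : Subalgebra (∀ i, R i) (∀ i, S i)) ⊤ =
          ∑ i, extLength (⊥ : Subalgebra (R i) (S i)) ⊤)) := by
  exact stmt_4_general R S hFCP fun _ _ => rfl
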